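/- Let L : ℝ^d → ℝ be differentiable, β-smooth with β > 0, and μ-strongly convex with μ > 0, with global minimizer w* and L* = L(w*). Let γ > 0 and ρ > 0 satisfy γβ(1 + ρβ) ≤ 2, and define the full-batch SAM iterates w_{t+1} = w_t − γ∇L(w_t + ρ∇L(w_t)). Define the Lyapunov function V_t = L(w_t) − L* + ‖w_t − w*‖²/(2ρ). Then for every t ≥ 0, V_{t+1} ≤ (1 − γμ(2 − γβ(1 + ρβ)))·V_t. -/

import Mathlib

open scoped RealInnerProductSpace

lemma sam_line {d : ℕ} (L : EuclideanSpace ℝ (Fin d) → ℝ)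
    (g : EuclideanSpace ℝ (Fin d) → EuclideanSpace ℝ (Fin d))
    (hg : ∀ x, HasGradientAt L (g x) x) (x v : EuclideanSpace ℝ (Fin d)) (s : ℝ) :
    HasDerivAt (fun s : ℝ => L (x + s • v)) (inner ℝ (g (x + s • v)) v) s := by
  have h1 : HasDerivAt (fun s : ℝ => x + s • v) v s := by
    simpa using ((hasDerivAt_id s).smul_const v).const_add x
  have h2 := (hg (x + s • v)).hasFDerivAt.comp_hasDerivAt s h1
  rw [InnerProductSpace.toDual_apply_apply] at h2
  exact h2

lemma sam_descent {d : ℕ} (L : EuclideanSpace ℝ (Fin d) → ℝ)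
    (g : EuclideanSpace ℝ (Fin d) → EuclideanSpace ℝ (Fin d))
    (hg : ∀ x, HasGradientAt L (g x) x) (β : ℝ) (hβ : 0 < β)
    (hLip : LipschitzWith β.toNNReal g) (x v : EuclideanSpace ℝ (Fin d)) :
    L (x + v) ≤ L x + inner ℝ (g x) v + β / 2 * ‖v‖ ^ 2 := by
  have hd : ∀ s : ℝ, HasDerivAt
      (fun s : ℝ => L (x + s • v) - s * inner ℝ (g x) v - s ^ 2 * (β / 2 * ‖v‖ ^ 2))
      (inner ℝ (g (x + s • v)) v - inner ℝ (g x) v - 2 * s * (β / 2 * ‖v‖ ^ 2)) s := by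
    intro s
    have h1 := sam_line L g hg x v s
    have h2 := (hasDerivAt_id s).mul_const (inner ℝ (g x) v)
    have h3 := (hasDerivAt_pow 2 s).mul_const (β / 2 * ‖v‖ ^ 2)
    convert (h1.sub h2).sub h3 using 1
    all_goals first | rfl | norm_num
  have ha := antitoneOn_of_deriv_nonpos (convex_Icc (0 : ℝ) 1)
    (fun s _ => (hd s).continuousAt.continuousWithinAt)
    (fun s _ => (hd s).differentiableAt.differentiableWithinAt)
    (by
      intro s hs
      rw [interior_Icc] at hs
      rw [(hd s).deriv, ← inner_sub_left]
      have h1 := real_inner_le_norm (g (x + s • v) - g x) v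
      have h2 := hLip.dist_le_mul (x + s • v) x
      rw [dist_eq_norm, dist_eq_norm, Real.coe_toNNReal _ hβ.le, add_sub_cancel_left, norm_smul,
        Real.norm_of_nonneg hs.1.le] at h2
      have h3 := mul_le_mul_of_nonneg_right h2 (norm_nonneg v)
      nlinarith)
  have := ha (Set.left_mem_Icc.2 zero_le_one) (Set.right_mem_Icc.2 zero_le_one) zero_le_one
  simp at this
  linarith

lemma sam_strong {d : ℕ} (L : EuclideanSpace ℝ (Fin d) → ℝ)
    (g : EuclideanSpace ℝ (Fin d) → EuclideanSpace ℝ (Fin d))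
    (hg : ∀ x, HasGradientAt L (g x) x) (μ : ℝ)
    (hconv : ConvexOn ℝ Set.univ (fun v => L v - μ / 2 * ‖v‖ ^ 2))
    (x v : EuclideanSpace ℝ (Fin d)) :
    L x + inner ℝ (g x) v + μ / 2 * ‖v‖ ^ 2 ≤ L (x + v) := by
  have hn : ∀ s : ℝ, ‖x + s • v‖ ^ 2 = ‖x‖ ^ 2 + s * (2 * inner ℝ x v) + s ^ 2 * ‖v‖ ^ 2 := by
    intro s
    rw [norm_add_sq_real, inner_smul_right, norm_smul, mul_pow, Real.norm_eq_abs, sq_abs]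
    ring
  have hd : HasDerivAt (fun s : ℝ => L (x + s • v) - μ / 2 * ‖x + s • v‖ ^ 2)
      (inner ℝ (g x) v - μ / 2 * (2 * inner ℝ x v)) 0 := by
    have h1 := sam_line L g hg x v 0
    have h2 := (hasDerivAt_id (0 : ℝ)).mul_const (2 * inner ℝ x v)
    have h3 := (hasDerivAt_pow 2 (0 : ℝ)).mul_const (‖v‖ ^ 2)
    have h4 := ((h2.const_add (‖x‖ ^ 2)).add h3).const_mul (μ / 2)
    have h5 := h1.sub h4
    simp only [hn]
    convert h5 using 1
    all_goals first | rfl | norm_num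
  have hc : ConvexOn ℝ Set.univ (fun s : ℝ => L (x + s • v) - μ / 2 * ‖x + s • v‖ ^ 2) := by
    have := hconv.comp_affineMap (AffineMap.lineMap x (x + v) : ℝ →ᵃ[ℝ] _)
    simpa [Function.comp_def, AffineMap.lineMap_apply, add_comm] using this
  have := hc.le_slope_of_hasDerivAt (Set.mem_univ 0) (Set.mem_univ 1) zero_lt_one hd
  rw [slope_def_field, hn, hn] at this
  simp at this
  linarith

/-- Lyapunov contraction for full-batch SAM on `β`-smooth, `μ`-strongly
convex functions (`β, μ > 0`) with global minimizer `w*`: if `γ, ρ > 0` satisfy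
`γβ(1 + ρβ) ≤ 2` and `w_{t+1} = w_t − γ∇L(w_t + ρ∇L(w_t))`, then with
`V_t = L(w_t) − L* + ‖w_t − w*‖²/(2ρ)` one has
`V_{t+1} ≤ (1 − γμ(2 − γβ(1 + ρβ)))·V_t` for every `t`. -/
theorem sam_fullbatch_lyapunov_strongly_convex {d : ℕ}
    (L : EuclideanSpace ℝ (Fin d) → ℝ)
    (g : EuclideanSpace ℝ (Fin d) → EuclideanSpace ℝ (Fin d))
    (hg : ∀ x, HasGradientAt L (g x) x)
    (β : ℝ) (hβ : 0 < β) (hLip : LipschitzWith β.toNNReal g)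
    (μ : ℝ) (hμ : 0 < μ)
    (hconv : ConvexOn ℝ Set.univ (fun v => L v - μ / 2 * ‖v‖ ^ 2))
    (wstar : EuclideanSpace ℝ (Fin d)) (hmin : ∀ v, L wstar ≤ L v)
    (γ ρ : ℝ) (hγ : 0 < γ) (hρ : 0 < ρ)
    (hstep : γ * β * (1 + ρ * β) ≤ 2)
    (w : ℕ → EuclideanSpace ℝ (Fin d))
    (hrec : ∀ t : ℕ, w (t + 1) = w t - γ • g (w t + ρ • g (w t)))
    (t : ℕ) :
    L (w (t + 1)) - L wstar + ‖w (t + 1) - wstar‖ ^ 2 / (2 * ρ) ≤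
      (1 - γ * μ * (2 - γ * β * (1 + ρ * β))) *
        (L (w t) - L wstar + ‖w t - wstar‖ ^ 2 / (2 * ρ)) := by
  have hs := sam_strong L g hg μ hconv
  have hdes := sam_descent L g hg β hβ hLip
  have hg0 : g wstar = 0 := by
    have h1 : IsLocalMin L wstar := Filter.Eventually.of_forall hmin
    have h2 := h1.hasFDerivAt_eq_zero (hg wstar).hasFDerivAt
    simpa using h2
  rw [hrec t]
  generalize w t = z
  obtain ⟨x, rfl⟩ : ∃ x, z = wstar + x := ⟨z - wstar, by simp⟩
  set a := g (wstar + x) with ha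
  set y := x + ρ • a with hy
  have hu : wstar + x + ρ • a = wstar + y := by rw [hy, add_assoc]
  rw [hu]
  set h := g (wstar + y) with hh
  -- descent
  have h1 := hdes (wstar + x) (-(γ • h))
  rw [← ha, inner_neg_right, inner_smul_right, norm_neg, norm_smul, mul_pow, Real.norm_eq_abs,
    sq_abs, ← sub_eq_add_neg] at h1
  -- distance
  have h2 : ‖wstar + x - γ • h - wstar‖ ^ 2
      = ‖x‖ ^ 2 - 2 * γ * inner ℝ h x + γ ^ 2 * ‖h‖ ^ 2 := by
    rw [show wstar + x - γ • h - wstar = x - γ • h by abel, norm_sub_sq_real, inner_smul_right,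
      norm_smul, mul_pow, Real.norm_eq_abs, sq_abs, real_inner_comm]
    ring
  have h3 : inner ℝ h y = inner ℝ h x + ρ * inner ℝ a h := by
    rw [hy, inner_add_right, inner_smul_right, real_inner_comm a h]
  have h4 : ‖y‖ ^ 2 = ‖x‖ ^ 2 + 2 * ρ * inner ℝ a x + ρ ^ 2 * ‖a‖ ^ 2 := by
    rw [hy, norm_add_sq_real, inner_smul_right, norm_smul, mul_pow, Real.norm_eq_abs, sq_abs,
      real_inner_comm]
    ring
  -- strong monotonicity
  have h5 := hs (wstar + y) (-y)
  rw [← hh, inner_neg_right, norm_neg, add_neg_cancel_right] at h5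
  have h6 := hs wstar y
  rw [hg0, inner_zero_left] at h6
  have h7 := hs (wstar + x) (-x)
  rw [← ha, inner_neg_right, norm_neg, add_neg_cancel_right] at h7
  -- cocoercivity
  have h8 := hdes wstar (β⁻¹ • h)
  rw [hg0, inner_zero_left, norm_smul, mul_pow, Real.norm_eq_abs, sq_abs] at h8
  have h9 := hs (wstar + y) (β⁻¹ • h - y)
  rw [← hh, show wstar + y + (β⁻¹ • h - y) = wstar + β⁻¹ • h by abel, inner_sub_right,
    inner_smul_right, real_inner_self_eq_norm_sq] at h9
  have hmy := hmin (wstar + y)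
  have h10 : 0 ≤ μ / 2 * ‖β⁻¹ • h - y‖ ^ 2 := by positivity
  have h12 := hdes (wstar + y) (-(β⁻¹ • h))
  rw [← hh, inner_neg_right, inner_smul_right, norm_neg, norm_smul, mul_pow, Real.norm_eq_abs,
    sq_abs, real_inner_self_eq_norm_sq] at h12
  have h13 := hmin (wstar + y + -(β⁻¹ • h))
  have hb : β / 2 * (β⁻¹ ^ 2 * ‖h‖ ^ 2) = β⁻¹ * ‖h‖ ^ 2 / 2 := by field_simp
  rw [hb] at h8 h12
  have hco : β⁻¹ * ‖h‖ ^ 2 ≤ inner ℝ h y := by linarith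
  have hA : ‖h‖ ^ 2 ≤ β * inner ℝ h y := by
    rwa [inv_mul_le_iff₀ hβ] at hco
  have hP : μ * ‖y‖ ^ 2 ≤ inner ℝ h y := by linarith
  rw [h2, add_sub_cancel_left]
  have hV : 2 * ρ * (L (wstar + x) - L wstar) + ‖x‖ ^ 2 ≤ ‖y‖ ^ 2 := by
    have e1 : 0 ≤ μ / 2 * ‖x‖ ^ 2 := by positivity
    have e2 : 0 ≤ ρ ^ 2 * ‖a‖ ^ 2 := by positivity
    have e3 : L (wstar + x) - L wstar ≤ inner ℝ a x := by linarith
    have e4 := mul_le_mul_of_nonneg_left e3 (by positivity : 0 ≤ 2 * ρ)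
    linarith
  have k0 : 0 ≤ 2 - γ * β * (1 + ρ * β) := by linarith
  generalize hk : 2 - γ * β * (1 + ρ * β) = k at *
  have f1 := mul_le_mul_of_nonneg_left h1 (by positivity : 0 ≤ 2 * ρ)
  have f2 := mul_le_mul_of_nonneg_left hA (by positivity : 0 ≤ γ ^ 2 * (1 + ρ * β))
  have f3 := mul_le_mul_of_nonneg_left hP (by positivity : 0 ≤ γ * k)
  have f4 := mul_le_mul_of_nonneg_left hV (by positivity : 0 ≤ γ * k * μ)
  have key : 2 * ρ * (L (wstar + x - γ • h) - L wstar)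
      + (‖x‖ ^ 2 - 2 * γ * inner ℝ h x + γ ^ 2 * ‖h‖ ^ 2)
      ≤ (1 - γ * μ * k) * (2 * ρ * (L (wstar + x) - L wstar) + ‖x‖ ^ 2) := by
    have f5 : γ * k * inner ℝ h y
        = 2 * γ * inner ℝ h y - γ ^ 2 * (1 + ρ * β) * (β * inner ℝ h y) := by
      rw [← hk]; ring
    have f6 : 2 * γ * inner ℝ h y = 2 * γ * inner ℝ h x + 2 * γ * (ρ * inner ℝ a h) := by
      rw [h3]; ring
    linarith
  have g1 : ∀ p q : ℝ, p + q / (2 * ρ) = (2 * ρ * p + q) / (2 * ρ) := by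
    intro p q; field_simp
  rw [g1, g1, ← mul_div_assoc]
  exact div_le_div_of_nonneg_right key (by positivity)
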